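/- For every n ≥ 1 and every j with 1 ≤ j ≤ 2^(n-1), one has x_{2^(n-1)+1−j}^(n) = 1 / x_j^(n); that is, the n-th generation of the Calkin–Wilf tree is symmetric about its middle under taking reciprocals. -/

import Mathlib

/-- The generations of the Calkin–Wilf tree: `CW 0 = [1/1]` is the first
generation, and each generation is obtained from the previous one by replacing
each entry `x` by `x/(x+1)` and `x+1`, in this order.  Thus the `n`-th
generation of the paper is `CW (n-1)`, whose `j`-th entry (1-based) is
`(CW (n-1)).getD (j-1) 0`. -/
def CW : ℕ → List ℚ
  | 0 => [1]
  | n + 1 => (CW n).flatMap (fun x => [x / (x + 1), x + 1])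

theorem CW_pos (n : ℕ) : ∀ x ∈ CW n, 0 < x := by
  induction n with
  | zero => simp [CW]
  | succ n ih =>
    intro x hx
    simp only [CW, List.mem_flatMap, List.mem_cons, List.not_mem_nil, or_false] at hx
    obtain ⟨a, ha, rfl | rfl⟩ := hx
    · have := ih a ha
      positivity
    · have := ih a ha
      positivity

theorem CW_length (n : ℕ) : (CW n).length = 2 ^ n := by
  induction n with
  | zero => simp [CW]
  | succ n ih =>
    simp [CW, List.length_flatMap, ih, pow_succ]

theorem CW_reverse (n : ℕ) : (CW n).reverse = (CW n).map (fun x => x⁻¹) := by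
  induction n with
  | zero => simp [CW]
  | succ n ih =>
    simp only [CW, List.reverse_flatMap, ih, List.map_flatMap, List.flatMap_map]
    apply List.flatMap_congr
    intro x hx
    have := CW_pos n x hx
    simp only [Function.comp, List.reverse_cons, List.reverse_nil, List.nil_append,
      List.map_cons, List.map_nil, List.cons_append, List.cons.injEq, and_true]
    constructor
    · field_simp
      ring
    · field_simp
      ring

/-- The `n`-th generation of the Calkin–Wilf tree is symmetric about its middle
under taking reciprocals: `x_{2^(n-1)+1-j}^(n) = 1 / x_j^(n)` for
`1 ≤ j ≤ 2^(n-1)`. -/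
theorem calkin_wilf_reciprocal_symmetry (n : ℕ) (hn : 1 ≤ n)
    (j : ℕ) (hj1 : 1 ≤ j) (hj2 : j ≤ 2 ^ (n - 1)) :
    (CW (n - 1)).getD (2 ^ (n - 1) - j) 0 = ((CW (n - 1)).getD (j - 1) 0)⁻¹ := by
  have hl := CW_length (n - 1)
  have h := CW_reverse (n - 1)
  have h2 : (CW (n - 1)).reverse[j - 1]? = ((CW (n - 1)).map (fun x => x⁻¹))[j - 1]? := by
    rw [h]
  rw [List.getElem?_reverse (by omega), List.getElem?_map, hl,
    show 2 ^ (n - 1) - 1 - (j - 1) = 2 ^ (n - 1) - j by omega] at h2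
  rw [List.getD_eq_getElem?_getD, List.getD_eq_getElem?_getD, h2]
  cases (CW (n - 1))[j - 1]? <;> simp
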